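/- Let (H, ψ) and (H', ψ') be as in the context and let f : H → H' be a K-linear map with f ∘ ψ = ψ' ∘ f. Let (W_i H)_{i ∈ ℤ} and (W_i H')_{i ∈ ℤ} be increasing, exhaustive, eventually-zero-below families of ψ-invariant (respectively ψ'-invariant) subspaces such that each graded quotient W_i H / W_{i-1} H (respectively W_i H' / W_{i-1} H') with the induced endomorphism is pure of weight i. Then f respects the filtrations and is strict: for every i ∈ ℤ one has f(W_i H) = f(H) ∩ W_i H'. -/

import Mathlib

open Polynomial

noncomputable section

/-- `α` is a Weil number of weight `i` relative to `q`: it is algebraic over `ℚ` and every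
complex root of its minimal polynomial over `ℚ` has absolute value `q ^ (i / 2)`. -/
def IsWeilNumber {F : Type*} [Field F] [CharZero F] (q : ℕ) (i : ℤ) (α : F) : Prop :=
  IsAlgebraic ℚ α ∧
    ∀ z : ℂ, aeval z (minpoly ℚ α) = 0 → ‖z‖ = (q : ℝ) ^ ((i : ℝ) / 2)

/-- `(H, ψ)` is pure of weight `i` (relative to `q`): every eigenvalue of `ψ`, i.e. every root
of its characteristic polynomial in a fixed algebraic closure of `K`, is a Weil number of
weight `i`. -/
def IsPureOfWeight (q : ℕ) (i : ℤ) {K : Type*} [Field K] [CharZero K]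
    {H : Type*} [AddCommGroup H] [Module K H] [FiniteDimensional K H]
    (ψ : H →ₗ[K] H) : Prop :=
  ∀ α : AlgebraicClosure K, aeval α (LinearMap.charpoly ψ) = 0 → IsWeilNumber q i α

/-- The endomorphism induced by `ψ` on the quotient `B ⧸ A` of two nested `ψ`-invariant
submodules `A ≤ B`. -/
def quotRestrict {K H : Type*} [Field K] [AddCommGroup H] [Module K H]
    (ψ : H →ₗ[K] H) (A B : Submodule K H)
    (hA : ∀ x ∈ A, ψ x ∈ A) (hB : ∀ x ∈ B, ψ x ∈ B) (_hAB : A ≤ B) :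
    (B ⧸ A.comap B.subtype) →ₗ[K] (B ⧸ A.comap B.subtype) :=
  Submodule.mapQ _ _ (ψ.restrict hB) (fun x hx => hA x.1 hx)

/-- A weight filtration on `(H, ψ)` relative to `q`: an increasing family of `ψ`-invariant
subspaces, equal to `0` for all sufficiently small indices and to `H` for all sufficiently
large indices, whose `i`-th graded quotient is pure of weight `i` for every `i`. -/
structure IsWeightFiltration (q : ℕ) {K : Type*} [Field K] [CharZero K]
    {H : Type*} [AddCommGroup H] [Module K H] [FiniteDimensional K H]
    (ψ : H →ₗ[K] H) (W : ℤ → Submodule K H) : Prop where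
  mono : Monotone W
  eventually_bot : ∃ m : ℤ, ∀ i ≤ m, W i = ⊥
  eventually_top : ∃ n : ℤ, ∀ i : ℤ, n ≤ i → W i = ⊤
  inv : ∀ i, ∀ x ∈ W i, ψ x ∈ W i
  pure : ∀ i : ℤ, IsPureOfWeight q i
    (quotRestrict ψ (W (i - 1)) (W i) (inv (i - 1)) (inv i)
      (mono (by omega : (i : ℤ) - 1 ≤ i)))

/-!
Pick coprime polynomials `P`, `Q` over `K` such that `P` kills `W i` and `W' i`, while `Q` kills
`H / W i` and `H' / W' i`: products of characteristic polynomials of the graded pieces of weight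
`≤ i`, respectively `> i`, will do, since Weil numbers of different weights are different. The
Chinese remainder theorem then gives one polynomial `e ≡ 1 mod P`, `e ≡ 0 mod Q` for which `e(ψ)`
and `e(ψ')` are projections onto `W i` and `W' i`. As `f` intertwines these two projections, it is
strict.
-/

theorem comp_aeval_eq_aeval_comp {R M N : Type*} [CommSemiring R] [AddCommMonoid M] [Module R M]
    [AddCommMonoid N] [Module R N] {ψ : M →ₗ[R] M} {ψ' : N →ₗ[R] N} {f : M →ₗ[R] N}
    (hf : f ∘ₗ ψ = ψ' ∘ₗ f) (P : R[X]) : f ∘ₗ aeval ψ P = aeval ψ' P ∘ₗ f := by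
  induction P using Polynomial.induction_on' with
  | add P Q hP hQ => rw [map_add, map_add, LinearMap.comp_add, LinearMap.add_comp, hP, hQ]
  | monomial n a =>
    have hpow : (ψ' ^ n) ∘ₗ f = f ∘ₗ (ψ ^ n) := Module.End.commute_pow_left_of_commute hf.symm n
    ext x
    simpa [aeval_monomial] using congrArg (a • ·) (LinearMap.congr_fun hpow x).symm

theorem map_eq_range_inf_of_isProj {R M N : Type*} [Semiring R] [AddCommMonoid M] [Module R M]
    [AddCommMonoid N] [Module R N] {f : M →ₗ[R] N} {e : M →ₗ[R] M} {e' : N →ₗ[R] N}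
    {U : Submodule R M} {U' : Submodule R N} (he : LinearMap.IsProj U e)
    (he' : LinearMap.IsProj U' e') (hf : f ∘ₗ e = e' ∘ₗ f) :
    U.map f = LinearMap.range f ⊓ U' := by
  have hfe (x : M) : f (e x) = e' (f x) := LinearMap.congr_fun hf x
  apply le_antisymm
  · rintro _ ⟨x, hx, rfl⟩
    refine ⟨⟨x, rfl⟩, ?_⟩
    rw [← he.map_id x hx, hfe]
    exact he'.map_mem _
  · rintro _ ⟨⟨x, rfl⟩, hx⟩
    exact ⟨e x, he.map_mem x, by rw [hfe, he'.map_id _ hx]⟩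

theorem isProj_aeval_of_dvd {R M : Type*} [CommRing R] [AddCommGroup M] [Module R M]
    {ψ : M →ₗ[R] M} {U : Submodule R M} {P Q e : R[X]} (hP : ∀ x ∈ U, aeval ψ P x = 0)
    (hQ : ∀ x, aeval ψ Q x ∈ U) (hPe : P ∣ 1 - e) (hQe : Q ∣ e) :
    LinearMap.IsProj U (aeval ψ e) where
  map_mem x := by
    obtain ⟨S, rfl⟩ := hQe
    rw [map_mul, Module.End.mul_apply]
    exact hQ _
  map_id x hx := by
    obtain ⟨S, hS⟩ := hPe
    have hkill : aeval ψ (1 - e) x = 0 := by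
      rw [hS, mul_comm, map_mul, Module.End.mul_apply, hP x hx, map_zero]
    rw [map_sub, map_one, LinearMap.sub_apply, Module.End.one_apply, sub_eq_zero] at hkill
    exact hkill.symm

theorem IsWeilNumber.weight_unique {F : Type*} [Field F] [CharZero F] {q : ℕ} (hq : 1 < q)
    {i j : ℤ} {α : F} (hi : IsWeilNumber q i α) (hj : IsWeilNumber q j α) : i = j := by
  obtain ⟨z, hz⟩ := IsAlgClosed.exists_aeval_eq_zero ℂ (minpoly ℚ α)
    (minpoly.degree_pos hi.1.isIntegral).ne'
  have hpow : (q : ℝ) ^ ((i : ℝ) / 2) = (q : ℝ) ^ ((j : ℝ) / 2) :=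
    (hi.2 z hz).symm.trans (hj.2 z hz)
  have hhalf : (i : ℝ) / 2 = (j : ℝ) / 2 :=
    (Real.strictMono_rpow_of_base_gt_one (Nat.one_lt_cast.mpr hq)).injective hpow
  exact_mod_cast (div_left_inj' two_ne_zero).mp hhalf

theorem IsPureOfWeight.isCoprime_charpoly {K : Type*} [Field K] [CharZero K]
    {H H' : Type*} [AddCommGroup H] [Module K H] [FiniteDimensional K H]
    [AddCommGroup H'] [Module K H'] [FiniteDimensional K H'] {q : ℕ} (hq : 1 < q) {i j : ℤ}
    (hij : i ≠ j) {ψ : H →ₗ[K] H} {ψ' : H' →ₗ[K] H'} (hψ : IsPureOfWeight q i ψ)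
    (hψ' : IsPureOfWeight q j ψ') : IsCoprime ψ.charpoly ψ'.charpoly := by
  rw [isCoprime_iff_aeval_ne_zero_of_isAlgClosed K (AlgebraicClosure K)]
  intro α
  by_contra! hα
  exact hij ((hψ α hα.1).weight_unique hq (hψ' α hα.2))

theorem aeval_charpoly_quotRestrict_mem {K H : Type*} [Field K] [AddCommGroup H] [Module K H]
    {ψ : H →ₗ[K] H} {A B : Submodule K H} [FiniteDimensional K (B ⧸ A.comap B.subtype)]
    (hA : ∀ x ∈ A, ψ x ∈ A) (hB : ∀ x ∈ B, ψ x ∈ B) (hAB : A ≤ B) {x : H} (hx : x ∈ B) :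
    aeval ψ (quotRestrict ψ A B hA hB hAB).charpoly x ∈ A := by
  set P := (quotRestrict ψ A B hA hB hAB).charpoly with hP
  have hsub : B.subtype (aeval (ψ.restrict hB) P ⟨x, hx⟩) = aeval ψ P x :=
    LinearMap.congr_fun (comp_aeval_eq_aeval_comp (f := B.subtype) rfl P) ⟨x, hx⟩
  have hquot : (A.comap B.subtype).mkQ (aeval (ψ.restrict hB) P ⟨x, hx⟩) =
      aeval (quotRestrict ψ A B hA hB hAB) P ((A.comap B.subtype).mkQ ⟨x, hx⟩) :=
    LinearMap.congr_fun (comp_aeval_eq_aeval_comp (ψ := ψ.restrict hB)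
      (f := (A.comap B.subtype).mkQ) rfl P) ⟨x, hx⟩
  rwa [hP, LinearMap.aeval_self_charpoly, LinearMap.zero_apply, Submodule.mkQ_apply,
    Submodule.Quotient.mk_eq_zero, Submodule.mem_comap, ← hP, hsub] at hquot

namespace IsWeightFiltration

variable {q : ℕ} {K : Type*} [Field K] [CharZero K]
  {H : Type*} [AddCommGroup H] [Module K H] [FiniteDimensional K H]
  {H' : Type*} [AddCommGroup H'] [Module K H'] [FiniteDimensional K H']
  {ψ : H →ₗ[K] H} {ψ' : H' →ₗ[K] H'} {W : ℤ → Submodule K H} {W' : ℤ → Submodule K H'}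

/-- The characteristic polynomial of the endomorphism induced by `ψ` on the graded quotient
`W j / W (j - 1)`. -/
def gradedCharpoly (hW : IsWeightFiltration q ψ W) (j : ℤ) : K[X] :=
  (quotRestrict ψ (W (j - 1)) (W j) (hW.inv (j - 1)) (hW.inv j)
    (hW.mono (sub_le_self j zero_le_one))).charpoly

theorem aeval_gradedCharpoly_mem (hW : IsWeightFiltration q ψ W) {j : ℤ} {x : H}
    (hx : x ∈ W j) : aeval ψ (hW.gradedCharpoly j) x ∈ W (j - 1) :=
  aeval_charpoly_quotRestrict_mem _ _ _ hx

theorem isCoprime_gradedCharpoly (hq : 1 < q) (hW : IsWeightFiltration q ψ W)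
    (hW' : IsWeightFiltration q ψ' W') {i j : ℤ} (hij : i ≠ j) :
    IsCoprime (hW.gradedCharpoly i) (hW'.gradedCharpoly j) :=
  (hW.pure i).isCoprime_charpoly hq hij (hW'.pure j)

/-- The product of the characteristic polynomials of the graded quotients of weight in `(a, b]`;
for `a ≤ b` it is the characteristic polynomial of `ψ` on `W b / W a`. -/
def charpolyIoc (hW : IsWeightFiltration q ψ W) (a b : ℤ) : K[X] :=
  ∏ j ∈ Finset.Ioc a b, hW.gradedCharpoly j

theorem isCoprime_charpolyIoc (hq : 1 < q) (hW : IsWeightFiltration q ψ W)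
    (hW' : IsWeightFiltration q ψ' W') (a i b : ℤ) :
    IsCoprime (hW.charpolyIoc a i) (hW'.charpolyIoc i b) :=
  IsCoprime.prod_left fun _ hj ↦ IsCoprime.prod_right fun _ hk ↦
    isCoprime_gradedCharpoly hq hW hW'
      ((Finset.mem_Ioc.mp hj).2.trans_lt (Finset.mem_Ioc.mp hk).1).ne

theorem aeval_charpolyIoc_mem (hW : IsWeightFiltration q ψ W) {a b : ℤ} (hab : a ≤ b) {x : H}
    (hx : x ∈ W b) : aeval ψ (hW.charpolyIoc a b) x ∈ W a := by
  induction b, hab using Int.leInduction generalizing x with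
  | base => simpa [charpolyIoc] using hx
  | succ b hab ih =>
    have hstep : aeval ψ (hW.gradedCharpoly (b + 1)) x ∈ W b := by
      simpa only [add_sub_cancel_right] using hW.aeval_gradedCharpoly_mem hx
    have hsplit : hW.charpolyIoc a (b + 1) = hW.charpolyIoc a b * hW.gradedCharpoly (b + 1) := by
      rw [charpolyIoc, ← Finset.insert_Ioc_right_eq_Ioc_add_one hab,
        Finset.prod_insert (by simp), mul_comm, charpolyIoc]
    rw [hsplit, map_mul, Module.End.mul_apply]
    exact ih hstep

theorem exists_aeval_charpolyIoc_eq_zero (hW : IsWeightFiltration q ψ W) (i : ℤ) :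
    ∃ m : ℤ, ∀ x ∈ W i, aeval ψ (hW.charpolyIoc m i) x = 0 := by
  obtain ⟨m, hm⟩ := hW.eventually_bot
  refine ⟨min m i, fun x hx ↦ ?_⟩
  have hbot := hW.aeval_charpolyIoc_mem (min_le_right m i) hx
  rwa [hm _ (min_le_left m i), Submodule.mem_bot] at hbot

theorem exists_forall_aeval_charpolyIoc_mem (hW : IsWeightFiltration q ψ W) (i : ℤ) :
    ∃ n : ℤ, ∀ x, aeval ψ (hW.charpolyIoc i n) x ∈ W i := by
  obtain ⟨n, hn⟩ := hW.eventually_top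
  refine ⟨max n i, fun x ↦ hW.aeval_charpolyIoc_mem (le_max_right n i) ?_⟩
  rw [hn _ (le_max_left n i)]
  exact Submodule.mem_top

theorem exists_isProj_aeval (hq : 1 < q) (hW : IsWeightFiltration q ψ W)
    (hW' : IsWeightFiltration q ψ' W') (i : ℤ) :
    ∃ e : K[X], LinearMap.IsProj (W i) (aeval ψ e) ∧ LinearMap.IsProj (W' i) (aeval ψ' e) := by
  obtain ⟨m, hP⟩ := hW.exists_aeval_charpolyIoc_eq_zero i
  obtain ⟨n, hQ⟩ := hW.exists_forall_aeval_charpolyIoc_mem i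
  obtain ⟨m', hP'⟩ := hW'.exists_aeval_charpolyIoc_eq_zero i
  obtain ⟨n', hQ'⟩ := hW'.exists_forall_aeval_charpolyIoc_mem i
  set P := hW.charpolyIoc m i
  set Q := hW.charpolyIoc i n
  set P' := hW'.charpolyIoc m' i
  set Q' := hW'.charpolyIoc i n'
  have hcoprime : IsCoprime (P * P') (Q * Q') :=
    ((isCoprime_charpolyIoc hq hW hW m i n).mul_right
      (isCoprime_charpolyIoc hq hW hW' m i n')).mul_left
    ((isCoprime_charpolyIoc hq hW' hW m' i n).mul_right
      (isCoprime_charpolyIoc hq hW' hW' m' i n'))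
  obtain ⟨u, v, huv⟩ := hcoprime
  set e := v * (Q * Q')
  have hPe : P * P' ∣ 1 - e := ⟨u, by rw [← huv]; ring⟩
  have hQe : Q * Q' ∣ e := Dvd.intro_left v rfl
  exact ⟨e, isProj_aeval_of_dvd hP hQ (dvd_of_mul_right_dvd hPe) (dvd_of_mul_right_dvd hQe),
    isProj_aeval_of_dvd hP' hQ' (dvd_of_mul_left_dvd hPe) (dvd_of_mul_left_dvd hQe)⟩

end IsWeightFiltration

theorem statement5_general {q : ℕ} (hq : 1 < q)
    {K : Type*} [Field K] [CharZero K]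
    {H : Type*} [AddCommGroup H] [Module K H] [FiniteDimensional K H]
    {H' : Type*} [AddCommGroup H'] [Module K H'] [FiniteDimensional K H']
    {ψ : H →ₗ[K] H} {ψ' : H' →ₗ[K] H'}
    {f : H →ₗ[K] H'} (hf : f ∘ₗ ψ = ψ' ∘ₗ f)
    {W : ℤ → Submodule K H} {W' : ℤ → Submodule K H'}
    (hW : IsWeightFiltration q ψ W) (hW' : IsWeightFiltration q ψ' W') (i : ℤ) :
    (W i).map f = LinearMap.range f ⊓ W' i := by
  obtain ⟨e, he, he'⟩ := hW.exists_isProj_aeval hq hW' i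
  exact map_eq_range_inf_of_isProj he he' (comp_aeval_eq_aeval_comp hf e)

/-- a linear map intertwining `ψ` and `ψ'` respects weight filtrations and is
strict: `f (W i) = f (H) ⊓ W' i` for every `i`. -/
theorem statement5 (p n₀ : ℕ) (hp : p.Prime) (hn₀ : 0 < n₀)
    (K : Type*) [Field K] [CharZero K]
    (H : Type*) [AddCommGroup H] [Module K H] [FiniteDimensional K H]
    (H' : Type*) [AddCommGroup H'] [Module K H'] [FiniteDimensional K H']
    (ψ : H →ₗ[K] H) (ψ' : H' →ₗ[K] H')
    (f : H →ₗ[K] H') (hf : f ∘ₗ ψ = ψ' ∘ₗ f)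
    (W : ℤ → Submodule K H) (W' : ℤ → Submodule K H')
    (hW : IsWeightFiltration (p ^ n₀) ψ W)
    (hW' : IsWeightFiltration (p ^ n₀) ψ' W') :
    ∀ i : ℤ, (W i).map f = LinearMap.range f ⊓ W' i :=
  statement5_general (Nat.one_lt_pow hn₀.ne' hp.one_lt) hf hW hW'

end
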